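/- Let f : ℝ² → ℝ² be a C^∞ map with f(0)=0 which has corank one at 0, let λ be its Jacobian determinant, and let η be any null vector field for f. Then for every integer r ≥ 5, the r-jet j^r f(0) is A^r-equivalent to the r-jet at 0 of the map (x,y) ↦ (x, xy + y^r) if and only if dλ(0) ≠ 0, (η^i λ)(0) = 0 for all 1 ≤ i ≤ r−2, and (η^{r−1} λ)(0) ≠ 0. -/

import Mathlib

open Filter Topology

noncomputable section

/-- Directional derivative of a scalar function. -/
def dop (v : ℝ × ℝ) (g : ℝ × ℝ → ℝ) : ℝ × ℝ → ℝ :=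
  fun p => fderiv ℝ g p v

/-- Partial derivative operator in the first coordinate. -/
def pdx : (ℝ × ℝ → ℝ) → ℝ × ℝ → ℝ := dop (1, 0)

/-- Partial derivative operator in the second coordinate. -/
def pdy : (ℝ × ℝ → ℝ) → ℝ × ℝ → ℝ := dop (0, 1)

/-- Taylor coefficient `a_{ij} = ∂_x^i ∂_y^j g(0,0) / (i! j!)` of `g` at the origin. -/
def tcoeff (g : ℝ × ℝ → ℝ) (i j : ℕ) : ℝ :=
  (pdx^[i] (pdy^[j] g)) 0 / (Nat.factorial i * Nat.factorial j)

/-- The Jacobian determinant `λ_f` of a map `f : ℝ² → ℝ²`. -/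
def jacDet (f : ℝ × ℝ → ℝ × ℝ) (p : ℝ × ℝ) : ℝ :=
  (fderiv ℝ f p (1, 0)).1 * (fderiv ℝ f p (0, 1)).2 -
    (fderiv ℝ f p (1, 0)).2 * (fderiv ℝ f p (0, 1)).1

/-- `f` has corank one at `0` : the derivative of `f` at `0` has rank one. -/
def CorankOne (f : ℝ × ℝ → ℝ × ℝ) : Prop :=
  LinearMap.rank ((fderiv ℝ f 0).toLinearMap) = 1

/-- `η` is a null vector field for `f` near `0`. -/
def IsNullVF (f η : ℝ × ℝ → ℝ × ℝ) : Prop :=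
  η 0 ≠ 0 ∧ ∃ U ∈ 𝓝 (0 : ℝ × ℝ),
    ContDiffOn ℝ (⊤ : ℕ∞) η U ∧ ∀ p ∈ U, jacDet f p = 0 → fderiv ℝ f p (η p) = 0

/-- The derivative `(ηg)(p) = Dg(p)(η(p))` of `g` along the vector field `η`. -/
def etaD (η : ℝ × ℝ → ℝ × ℝ) (g : ℝ × ℝ → ℝ) : ℝ × ℝ → ℝ :=
  fun p => fderiv ℝ g p (η p)

/-- The iterated derivative `η^k g` along the vector field `η`. -/
def etaIter (η : ℝ × ℝ → ℝ × ℝ) : ℕ → (ℝ × ℝ → ℝ) → ℝ × ℝ → ℝ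
  | 0, g => g
  | k + 1, g => etaD η (etaIter η k g)

/-- The Hessian matrix of second partial derivatives of `g` at `0`. -/
def hess (g : ℝ × ℝ → ℝ) : Matrix (Fin 2) (Fin 2) ℝ :=
  !![pdx (pdx g) 0, pdx (pdy g) 0; pdy (pdx g) 0, pdy (pdy g) 0]

/-- `A^r`-equivalence of the `r`-jets at `0` of two map-germs `(ℝ²,0) → (ℝ²,0)`. -/
def JetEquiv (r : ℕ) (f g : ℝ × ℝ → ℝ × ℝ) : Prop :=
  ∃ φ ψ : ℝ × ℝ → ℝ × ℝ,
    ContDiff ℝ (⊤ : ℕ∞) φ ∧ ContDiff ℝ (⊤ : ℕ∞) ψ ∧ φ 0 = 0 ∧ ψ 0 = 0 ∧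
    Function.Bijective (⇑(fderiv ℝ φ 0)) ∧ Function.Bijective (⇑(fderiv ℝ ψ 0)) ∧
    ∀ i ≤ r, iteratedFDeriv ℝ i (ψ ∘ f ∘ φ) 0 = iteratedFDeriv ℝ i g 0

/-- `A`-equivalence of two map-germs `(ℝ²,0) → (ℝ²,0)`. -/
def AEquiv (f g : ℝ × ℝ → ℝ × ℝ) : Prop :=
  ∃ φ ψ : ℝ × ℝ → ℝ × ℝ,
    ContDiff ℝ (⊤ : ℕ∞) φ ∧ ContDiff ℝ (⊤ : ℕ∞) ψ ∧ φ 0 = 0 ∧ ψ 0 = 0 ∧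
    Function.Bijective (⇑(fderiv ℝ φ 0)) ∧ Function.Bijective (⇑(fderiv ℝ ψ 0)) ∧
    ∀ᶠ p in 𝓝 (0 : ℝ × ℝ), ψ (f (φ p)) = g p

/-- `f` has the form `(x, g(x,y))` where `g` is `C^∞` and the Taylor coefficients of `g`
of total degree `< N` at the origin are prescribed by `P`. -/
def HasForm (f : ℝ × ℝ → ℝ × ℝ) (g : ℝ × ℝ → ℝ) (N : ℕ) (P : ℕ → ℕ → ℝ) : Prop :=
  ContDiff ℝ (⊤ : ℕ∞) g ∧ (∀ p, f p = (p.1, g p)) ∧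
    ∀ i j, i + j < N → tcoeff g i j = P i j

/-!
Every corank one germ is `A`-equivalent to some `(x, y) ↦ (x, q (x, y))`, whose Jacobian
determinant is `∂q/∂y` and for which `∂/∂y` is a null vector field. The right-hand condition is
invariant under `A`-equivalence and under the choice of null vector field: an equivalence
multiplies the Jacobian determinant by a unit and transports null fields, while two null fields
are proportional along the singular curve, and on it a function vanishing there has differential
proportional to that of the Jacobian determinant. For `(x, q)` the condition says that `q (0, y)`
has a critical point of multiplicity exactly `r - 1` at `0` and that `∂²q/∂x∂y ≠ 0` there; this
depends on the `r`-jet of `q` only. Conversely, Hadamard's lemma then gives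
`q (x, y) = a x + x * y * H (x, y) + y ^ r * D y` with `H` and `D` nonzero at the origin.
Removing `a`, taking `y * H` as the new `y` and rescaling leaves `x * y + y ^ r` up to terms of
order `r + 1`.
-/

open Function
open scoped ContDiff

section VectorField

variable {ξ ζ : ℝ × ℝ → ℝ × ℝ} {g h μ : ℝ × ℝ → ℝ} {p : ℝ × ℝ} {k : ℕ}

theorem etaIter_succ' (ξ : ℝ × ℝ → ℝ × ℝ) (k : ℕ) (g : ℝ × ℝ → ℝ) :
    etaIter ξ (k + 1) g = etaIter ξ k (etaD ξ g) := by
  induction k with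
  | zero => rfl
  | succ k ih => exact congrArg (etaD ξ) ih

theorem etaD_congr (ξ : ℝ × ℝ → ℝ × ℝ) (e : g =ᶠ[𝓝 p] h) : etaD ξ g =ᶠ[𝓝 p] etaD ξ h := by
  filter_upwards [e.fderiv (𝕜 := ℝ)] with q hq
  simp only [etaD, hq]

theorem contDiffAt_etaD (hξ : ContDiffAt ℝ ∞ ξ p) (hg : ContDiffAt ℝ ∞ g p) :
    ContDiffAt ℝ ∞ (etaD ξ g) p :=
  (hg.fderiv_right le_rfl).clm_apply hξ

theorem eventually_differentiableAt {E F : Type*} [NormedAddCommGroup E] [NormedSpace ℝ E]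
    [NormedAddCommGroup F] [NormedSpace ℝ F] {f : E → F} {x : E} (hf : ContDiffAt ℝ 1 f x) :
    ∀ᶠ y in 𝓝 x, DifferentiableAt ℝ f y :=
  (hf.eventually (by simp)).mono fun _ hy => hy.differentiableAt one_ne_zero

theorem etaD_add (ξ : ℝ × ℝ → ℝ × ℝ) (hg : ContDiffAt ℝ 1 g p) (hh : ContDiffAt ℝ 1 h p) :
    etaD ξ (g + h) =ᶠ[𝓝 p] etaD ξ g + etaD ξ h := by
  filter_upwards [eventually_differentiableAt hg, eventually_differentiableAt hh] with q hgq hhq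
  simp [etaD, fderiv_add hgq hhq]

theorem etaD_mul (ξ : ℝ × ℝ → ℝ × ℝ) (hg : ContDiffAt ℝ 1 g p) (hh : ContDiffAt ℝ 1 h p) :
    etaD ξ (g * h) =ᶠ[𝓝 p] g * etaD ξ h + h * etaD ξ g := by
  filter_upwards [eventually_differentiableAt hg, eventually_differentiableAt hh] with q hgq hhq
  simp [etaD, fderiv_mul hgq hhq]

/-- The derivatives of `g` at `p` along `ξ`, of order less than `k`, all vanish: `g` has contact of
order at least `k` with the integral curve of `ξ` through `p`. -/
def VanishesAlong (ξ : ℝ × ℝ → ℝ × ℝ) (p : ℝ × ℝ) (k : ℕ) (g : ℝ × ℝ → ℝ) : Prop :=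
  ∀ i < k, etaIter ξ i g p = 0

namespace VanishesAlong

theorem succ_iff : VanishesAlong ξ p (k + 1) g ↔ g p = 0 ∧ VanishesAlong ξ p k (etaD ξ g) := by
  simp only [VanishesAlong, Nat.forall_lt_succ_left', etaIter_succ', etaIter.eq_1]

theorem mono {l : ℕ} (hg : VanishesAlong ξ p k g) (hl : l ≤ k) : VanishesAlong ξ p l g :=
  fun i hi => hg i (hi.trans_le hl)

theorem congr (hg : VanishesAlong ξ p k g) (e : g =ᶠ[𝓝 p] h) : VanishesAlong ξ p k h := by
  induction k generalizing g h with
  | zero => exact fun i hi => absurd hi i.not_lt_zero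
  | succ k ih =>
    rw [succ_iff] at hg ⊢
    exact ⟨e.eq_of_nhds ▸ hg.1, ih hg.2 (etaD_congr ξ e)⟩

theorem add (hξ : ContDiffAt ℝ ∞ ξ p) (hg : ContDiffAt ℝ ∞ g p) (hh : ContDiffAt ℝ ∞ h p)
    (hgk : VanishesAlong ξ p k g) (hhk : VanishesAlong ξ p k h) :
    VanishesAlong ξ p k (g + h) := by
  induction k generalizing g h with
  | zero => exact fun i hi => absurd hi i.not_lt_zero
  | succ k ih =>
    rw [succ_iff] at hgk hhk ⊢
    refine ⟨by simp [hgk.1, hhk.1], ?_⟩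
    exact (ih (contDiffAt_etaD hξ hg) (contDiffAt_etaD hξ hh) hgk.2 hhk.2).congr
      (etaD_add ξ (hg.of_le (mod_cast le_top)) (hh.of_le (mod_cast le_top))).symm

theorem mul_left (hξ : ContDiffAt ℝ ∞ ξ p) (hh : ContDiffAt ℝ ∞ h p) (hg : ContDiffAt ℝ ∞ g p)
    (hgk : VanishesAlong ξ p k g) : VanishesAlong ξ p k (h * g) := by
  induction k generalizing g h with
  | zero => exact fun i hi => absurd hi i.not_lt_zero
  | succ k ih =>
    have hgk' := hgk.mono k.le_succ
    rw [succ_iff] at hgk ⊢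
    refine ⟨by simp [hgk.1], ?_⟩
    have hξg := contDiffAt_etaD hξ hg
    have hξh := contDiffAt_etaD hξ hh
    have hhξg : ContDiffAt ℝ ∞ (h * etaD ξ g) p := hh.mul hξg
    have hξhg : ContDiffAt ℝ ∞ (etaD ξ h * g) p := hξh.mul hg
    have hsum := add hξ hhξg hξhg (ih hh hξg hgk.2) (ih hξh hg hgk')
    rw [mul_comm (etaD ξ h)] at hsum
    exact hsum.congr (etaD_mul ξ (hh.of_le (mod_cast le_top)) (hg.of_le (mod_cast le_top))).symm

theorem mul_left_iff (hξ : ContDiffAt ℝ ∞ ξ p) (hh : ContDiffAt ℝ ∞ h p) (h0 : h p ≠ 0)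
    (hg : ContDiffAt ℝ ∞ g p) : VanishesAlong ξ p k (h * g) ↔ VanishesAlong ξ p k g := by
  refine ⟨fun hhg => ?_, mul_left hξ hh hg⟩
  refine (mul_left hξ (hh.inv h0) (hh.mul hg) hhg).congr ?_
  filter_upwards [hh.continuousAt.eventually_ne h0] with q hq
  simp [hq]

end VanishesAlong

theorem exists_contDiffAt_lagrange_multiplier {q : ℝ × ℝ → ℝ} (hμ : ContDiffAt ℝ ∞ μ p)
    (hq : ContDiffAt ℝ ∞ q p) (hdμ : fderiv ℝ μ p ≠ 0) (hμq : ∀ᶠ x in 𝓝 p, μ x = 0 → q x = 0) :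
    ∃ c : ℝ × ℝ → ℝ, ContDiffAt ℝ ∞ c p ∧
      ∀ᶠ x in 𝓝 p, μ x = 0 → fderiv ℝ q x = c x • fderiv ℝ μ x := by
  obtain ⟨v, hv : fderiv ℝ μ p v ≠ 0⟩ := DFunLike.ne_iff.1 hdμ
  have hμv : ContDiffAt ℝ ∞ (fun x => fderiv ℝ μ x v) p :=
    (hμ.fderiv_right le_rfl).clm_apply contDiffAt_const
  have hqv : ContDiffAt ℝ ∞ (fun x => fderiv ℝ q x v) p :=
    (hq.fderiv_right le_rfl).clm_apply contDiffAt_const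
  refine ⟨_, hqv.div hμv hv, ?_⟩
  have hμ1 : ContDiffAt ℝ 1 μ p := hμ.of_le (mod_cast le_top)
  have hq1 : ContDiffAt ℝ 1 q p := hq.of_le (mod_cast le_top)
  filter_upwards [hμ1.eventually (by simp), hq1.eventually (by simp),
    hμv.continuousAt.eventually_ne hv, hμq, hμq.eventually_nhds] with x hμx hqx hvx hx hnhds hμ0
  have hextr : IsLocalExtrOn q {y | μ y = μ x} x := by
    left
    filter_upwards [nhdsWithin_le_nhds hnhds, self_mem_nhdsWithin] with y hy hyx
    rw [hx hμ0, hy (hyx.trans hμ0)]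
  obtain ⟨a, b, hab, hL⟩ := hextr.exists_multipliers_of_hasStrictFDerivAt_1d
    (hμx.hasStrictFDerivAt one_ne_zero) (hqx.hasStrictFDerivAt one_ne_zero)
  have hLw (w) : a * fderiv ℝ μ x w + b * fderiv ℝ q x w = 0 := by
    simpa using DFunLike.congr_fun hL w
  have hb : b ≠ 0 := by
    rintro rfl
    have ha : a = 0 := by simpa [hvx] using hLw v
    exact hab (by rw [ha, Prod.mk_zero_zero])
  refine ContinuousLinearMap.ext fun w => ?_
  simp only [_root_.smul_apply, Pi.div_apply, smul_eq_mul]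
  rw [div_mul_eq_mul_div, eq_div_iff hvx]
  refine mul_left_cancel₀ hb ?_
  linear_combination fderiv ℝ μ x v * hLw w - fderiv ℝ μ x w * hLw v

namespace VanishesAlong

theorem of_zeroSet {q : ℝ × ℝ → ℝ} (hξ : ContDiffAt ℝ ∞ ξ p) (hμ : ContDiffAt ℝ ∞ μ p)
    (hdμ : fderiv ℝ μ p ≠ 0) (hq : ContDiffAt ℝ ∞ q p) (hμq : ∀ᶠ x in 𝓝 p, μ x = 0 → q x = 0)
    (hμk : VanishesAlong ξ p k μ) : VanishesAlong ξ p k q := by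
  induction k generalizing q with
  | zero => exact fun i hi => absurd hi i.not_lt_zero
  | succ k ih =>
    obtain ⟨c, hc, hcq⟩ := exists_contDiffAt_lagrange_multiplier hμ hq hdμ hμq
    have hcμ : ContDiffAt ℝ ∞ (c * etaD ξ μ) p := hc.mul (contDiffAt_etaD hξ hμ)
    have hr : ContDiffAt ℝ ∞ (etaD ξ q - c * etaD ξ μ) p := (contDiffAt_etaD hξ hq).sub hcμ
    have hrk : VanishesAlong ξ p k (etaD ξ q - c * etaD ξ μ) := by
      refine ih hr ?_ (hμk.mono k.le_succ)
      filter_upwards [hcq] with x hx hμx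
      simp [etaD, hx hμx]
    have hμ' := succ_iff.1 hμk
    have hsum := add hξ hr hcμ hrk (mul_left hξ hc (contDiffAt_etaD hξ hμ) hμ'.2)
    rw [sub_add_cancel] at hsum
    exact succ_iff.2 ⟨hμq.self_of_nhds hμ'.1, hsum⟩

theorem of_parallel (hξ : ContDiffAt ℝ ∞ ξ p) (hζ : ContDiffAt ℝ ∞ ζ p) (hμ : ContDiffAt ℝ ∞ μ p)
    (hdμ : fderiv ℝ μ p ≠ 0) (hh : ContDiffAt ℝ ∞ h p)
    (hζξ : ∀ᶠ x in 𝓝 p, μ x = 0 → ζ x = h x • ξ x) (hμk : VanishesAlong ξ p k μ)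
    (hg : ContDiffAt ℝ ∞ g p) (hgk : VanishesAlong ξ p k g) : VanishesAlong ζ p k g := by
  induction k generalizing g with
  | zero => exact fun i hi => absurd hi i.not_lt_zero
  | succ k ih =>
    have hμk' := hμk.mono k.le_succ
    have hξg := contDiffAt_etaD hξ hg
    have hζg := contDiffAt_etaD hζ hg
    have hhg : ContDiffAt ℝ ∞ (h * etaD ξ g) p := hh.mul hξg
    have hr : ContDiffAt ℝ ∞ (etaD ζ g - h * etaD ξ g) p := hζg.sub hhg
    have hrk : VanishesAlong ξ p k (etaD ζ g - h * etaD ξ g) := by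
      refine of_zeroSet hξ hμ hdμ hr ?_ hμk'
      filter_upwards [hζξ] with x hx hμx
      simp [etaD, hx hμx]
    rw [succ_iff] at hgk ⊢
    have hsum := add hξ hr hhg hrk (mul_left hξ hh hξg hgk.2)
    rw [sub_add_cancel] at hsum
    exact ⟨hgk.1, ih hμk' hζg hsum⟩

end VanishesAlong

theorem exists_contDiffAt_smul_eq_of_parallel (hξ : ContDiffAt ℝ ∞ ξ p) (hζ : ContDiffAt ℝ ∞ ζ p)
    (h0 : ξ p ≠ 0) : ∃ h : ℝ × ℝ → ℝ, ContDiffAt ℝ ∞ h p ∧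
      ∀ᶠ x in 𝓝 p, (ξ x).1 * (ζ x).2 = (ξ x).2 * (ζ x).1 → ζ x = h x • ξ x := by
  have hne {w : ℝ × ℝ} (hw : w ≠ 0) : w.1 * w.1 + w.2 * w.2 ≠ 0 := fun hz =>
    hw (Prod.ext (by simp; nlinarith) (by simp; nlinarith))
  refine ⟨_, ((hξ.fst.mul hζ.fst).add (hξ.snd.mul hζ.snd)).div
    ((hξ.fst.mul hξ.fst).add (hξ.snd.mul hξ.snd)) (hne h0), ?_⟩
  filter_upwards [hξ.continuousAt.eventually_ne h0] with x hx hpar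
  ext <;> simp only [Prod.smul_fst, Prod.smul_snd, Pi.div_apply, smul_eq_mul] <;>
    rw [div_mul_eq_mul_div, eq_div_iff (hne hx)]
  · linear_combination -(ξ x).2 * hpar
  · linear_combination (ξ x).1 * hpar

theorem vanishesAlong_iff_of_parallel (hξ : ContDiffAt ℝ ∞ ξ p) (hζ : ContDiffAt ℝ ∞ ζ p)
    (hξ0 : ξ p ≠ 0) (hζ0 : ζ p ≠ 0) (hμ : ContDiffAt ℝ ∞ μ p) (hdμ : fderiv ℝ μ p ≠ 0)
    (hpar : ∀ᶠ x in 𝓝 p, μ x = 0 → (ξ x).1 * (ζ x).2 = (ξ x).2 * (ζ x).1) :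
    VanishesAlong ξ p k μ ↔ VanishesAlong ζ p k μ := by
  obtain ⟨a, ha, haξ⟩ := exists_contDiffAt_smul_eq_of_parallel hξ hζ hξ0
  obtain ⟨b, hb, hbζ⟩ := exists_contDiffAt_smul_eq_of_parallel hζ hξ hζ0
  refine ⟨fun hk => hk.of_parallel hξ hζ hμ hdμ ha ?_ hμ hk,
    fun hk => hk.of_parallel hζ hξ hμ hdμ hb ?_ hμ hk⟩
  · filter_upwards [haξ, hpar] with x hx hpx hμx
    exact hx (hpx hμx)
  · filter_upwards [hbζ, hpar] with x hx hpx hμx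
    exact hx (by linear_combination -hpx hμx)

theorem etaD_comp_of_related {η φ : ℝ × ℝ → ℝ × ℝ} (hφ : ContDiffAt ℝ 1 φ p)
    (hg : ContDiffAt ℝ 1 g (φ p)) (hrel : ∀ᶠ x in 𝓝 p, fderiv ℝ φ x (ξ x) = η (φ x)) :
    etaD ξ (g ∘ φ) =ᶠ[𝓝 p] etaD η g ∘ φ := by
  filter_upwards [hrel, eventually_differentiableAt hφ,
    hφ.continuousAt.eventually (eventually_differentiableAt hg)] with x hx hφx hgx
  simp [etaD, fderiv_comp x hgx hφx, hx]

theorem vanishesAlong_comp_iff_of_related {η φ : ℝ × ℝ → ℝ × ℝ} (hφ : ContDiffAt ℝ 1 φ p)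
    (hη : ContDiffAt ℝ ∞ η (φ p)) (hg : ContDiffAt ℝ ∞ g (φ p))
    (hrel : ∀ᶠ x in 𝓝 p, fderiv ℝ φ x (ξ x) = η (φ x)) :
    VanishesAlong ξ p k (g ∘ φ) ↔ VanishesAlong η (φ p) k g := by
  induction k generalizing g with
  | zero => simp [VanishesAlong]
  | succ k ih =>
    have e := etaD_comp_of_related hφ (hg.of_le (mod_cast le_top)) hrel
    rw [VanishesAlong.succ_iff, VanishesAlong.succ_iff, ← ih (contDiffAt_etaD hη hg)]
    exact and_congr Iff.rfl ⟨fun H => H.congr e, fun H => H.congr e.symm⟩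

end VectorField

section CoordChange

variable {E F : Type*} [NormedAddCommGroup E] [NormedSpace ℝ E] [NormedAddCommGroup F]
  [NormedSpace ℝ F]

theorem exists_contDiff_eventuallyEq [HasContDiffBump E] {n : ℕ∞} {g : E → F} {x : E}
    (hg : ∀ᶠ y in 𝓝 x, ContDiffAt ℝ n g y) : ∃ G : E → F, ContDiff ℝ n G ∧ G =ᶠ[𝓝 x] g := by
  obtain ⟨ε, hε, hball⟩ := Metric.eventually_nhds_iff.1 hg
  let b : ContDiffBump x := ⟨ε / 4, ε / 2, by positivity, by linarith⟩
  refine ⟨fun y => b y • g y, contDiff_iff_contDiffAt.2 fun y => ?_, ?_⟩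
  · by_cases hy : dist y x < ε
    · exact b.contDiffAt.smul (hball hy)
    · refine (contDiffAt_const (c := (0 : F))).congr_of_eventuallyEq ?_
      have hfar : ∀ᶠ z in 𝓝 y, ε / 2 < dist z x :=
        (continuous_id.dist continuous_const).continuousAt.eventually_const_lt
          (by simp only [id]; linarith)
      filter_upwards [hfar] with z hz
      rw [b.zero_of_le_dist hz.le, zero_smul]
  · filter_upwards [b.eventuallyEq_one] with y hy
    simp [hy]

/-- A smooth map that fixes the origin and is a local diffeomorphism there: a representative,
defined on the whole space, of a germ of a coordinate change at the origin. -/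
structure IsCoordChange (φ : E → E) : Prop where
  contDiff : ContDiff ℝ ∞ φ
  map_zero : φ 0 = 0
  bijective : Function.Bijective (fderiv ℝ φ 0)

namespace IsCoordChange

variable {φ ψ : E → E}

protected theorem id : IsCoordChange (id : E → E) :=
  ⟨contDiff_id, rfl, by rw [fderiv_id]; exact Function.bijective_id⟩

theorem differentiable (hφ : IsCoordChange φ) : Differentiable ℝ φ :=
  hφ.contDiff.differentiable (by simp)

theorem tendsto (hφ : IsCoordChange φ) : Tendsto φ (𝓝 0) (𝓝 0) := by
  simpa [hφ.map_zero] using hφ.contDiff.continuous.tendsto 0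

protected theorem comp (hψ : IsCoordChange ψ) (hφ : IsCoordChange φ) : IsCoordChange (ψ ∘ φ) := by
  refine ⟨hψ.contDiff.comp hφ.contDiff, by simp [hφ.map_zero, hψ.map_zero], ?_⟩
  rw [fderiv_comp 0 (hψ.differentiable _) (hφ.differentiable 0), hφ.map_zero]
  exact hψ.bijective.comp hφ.bijective

theorem eventually_isInvertible [CompleteSpace E] (hφ : IsCoordChange φ) :
    ∀ᶠ p in 𝓝 0, (fderiv ℝ φ p).IsInvertible := by
  let L := ContinuousLinearEquiv.ofBijective (fderiv ℝ φ 0)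
    (LinearMap.ker_eq_bot.2 hφ.bijective.1) (LinearMap.range_eq_top.2 hφ.bijective.2)
  have hL : (L : E →L[ℝ] E) = fderiv ℝ φ 0 := ContinuousLinearEquiv.coe_ofBijective _ _ _
  have hcont := (hφ.contDiff.continuous_fderiv (by simp)).tendsto 0
  exact hcont.eventually (hL ▸ L.nhds)

theorem exists_rightInverse [FiniteDimensional ℝ E] (hφ : IsCoordChange φ) :
    ∃ χ : E → E, IsCoordChange χ ∧ ∀ᶠ p in 𝓝 0, φ (χ p) = p := by
  have : CompleteSpace E := FiniteDimensional.complete ℝ E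
  have hφ0 := hφ.contDiff.contDiffAt (x := 0)
  obtain ⟨L, hL⟩ := hφ.eventually_isInvertible.self_of_nhds
  have hφL : HasFDerivAt φ (L : E →L[ℝ] E) 0 := hL ▸ (hφ.differentiable 0).hasFDerivAt
  let e := hφ0.toOpenPartialHomeomorph φ hφL (by simp)
  have he0 : (0 : E) ∈ e.source := hφ0.mem_toOpenPartialHomeomorph_source hφL (by simp)
  have heφ : e 0 = 0 := hφ.map_zero
  have ht0 : (0 : E) ∈ e.target := heφ ▸ e.map_source he0
  have hsymm0 : e.symm 0 = 0 := by simpa [heφ] using e.left_inv he0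
  have hsymm_tendsto : Tendsto e.symm (𝓝 0) (𝓝 0) := by
    simpa [hsymm0] using (e.continuousAt_symm ht0).tendsto
  have htarget : ∀ᶠ p in 𝓝 0, p ∈ e.target := e.open_target.mem_nhds ht0
  have hsymm : ∀ᶠ p in 𝓝 0, ContDiffAt ℝ ∞ e.symm p := by
    filter_upwards [htarget, hsymm_tendsto.eventually hφ.eventually_isInvertible] with p hp ⟨M, hM⟩
    exact e.contDiffAt_symm hp (hM ▸ (hφ.differentiable _).hasFDerivAt) hφ.contDiff.contDiffAt
  obtain ⟨χ, hχ, hχe⟩ := exists_contDiff_eventuallyEq hsymm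
  have hχ0 : χ 0 = 0 := hχe.self_of_nhds.trans hsymm0
  have hinv : ∀ᶠ p in 𝓝 0, φ (χ p) = p := by
    filter_upwards [hχe, htarget] with p hpχ hp
    rw [hpχ]
    exact e.right_inv hp
  refine ⟨χ, ⟨hχ, hχ0, ?_⟩, hinv⟩
  have hcomp : fderiv ℝ φ 0 ∘L fderiv ℝ χ 0 = .id ℝ E := by
    have hinv' : φ ∘ χ =ᶠ[𝓝 0] id := hinv
    rw [← fderiv_id, ← hinv'.fderiv_eq, fderiv_comp 0 (hφ.differentiable _)
      (hχ.differentiable (by simp) 0), hχ0]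
  refine (Function.Bijective.of_comp_iff' hφ.bijective _).1 ?_
  rw [← ContinuousLinearMap.coe_comp, hcomp]
  exact Function.bijective_id

end IsCoordChange

end CoordChange

section JacobianDeterminant

variable {f g η ζ φ ψ : ℝ × ℝ → ℝ × ℝ} {p : ℝ × ℝ}

theorem jacDet_eq_det (f : ℝ × ℝ → ℝ × ℝ) (p : ℝ × ℝ) :
    jacDet f p = LinearMap.det (fderiv ℝ f p : ℝ × ℝ →ₗ[ℝ] ℝ × ℝ) := by
  rw [← LinearMap.det_toMatrix (Module.Basis.finTwoProd ℝ), Matrix.det_fin_two]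
  simp [LinearMap.toMatrix_apply, jacDet, mul_comm]

theorem jacDet_ne_zero_iff_bijective : jacDet f p ≠ 0 ↔ Function.Bijective (fderiv ℝ f p) := by
  rw [jacDet_eq_det, ← isUnit_iff_ne_zero, ← LinearMap.isUnit_iff_isUnit_det, Module.End.isUnit_iff]
  rfl

theorem jacDet_comp (hf : DifferentiableAt ℝ f (φ p)) (hφ : DifferentiableAt ℝ φ p) :
    jacDet (f ∘ φ) p = jacDet f (φ p) * jacDet φ p := by
  simp only [jacDet_eq_det]
  rw [fderiv_comp p hf hφ]
  exact LinearMap.det_comp _ _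

theorem contDiffAt_jacDet (hf : ContDiffAt ℝ ∞ f p) : ContDiffAt ℝ ∞ (jacDet f) p := by
  have h (v) : ContDiffAt ℝ ∞ (fun q => fderiv ℝ f q v) p :=
    (hf.fderiv_right le_rfl).clm_apply contDiffAt_const
  exact ((h _).fst.mul (h _).snd).sub ((h _).snd.mul (h _).fst)

theorem CorankOne.jacDet_eq_zero (hf : CorankOne f) : jacDet f 0 = 0 := by
  by_contra hne
  have hrange := LinearMap.range_eq_top.2 (jacDet_ne_zero_iff_bijective.1 hne).2
  have hrank : Module.rank ℝ (ℝ × ℝ) = 1 := by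
    rw [← rank_top ℝ (ℝ × ℝ), ← hrange]
    exact hf
  simp [← Module.finrank_eq_rank] at hrank

theorem CorankOne.fderiv_ne_zero (hf : CorankOne f) : fderiv ℝ f 0 ≠ 0 := by
  intro h0
  simp [CorankOne, h0] at hf

theorem fst_mul_snd_eq_of_map_eq_zero {L : ℝ × ℝ →L[ℝ] ℝ × ℝ} (hL : L ≠ 0) {v w : ℝ × ℝ}
    (hv : L v = 0) (hw : L w = 0) : v.1 * w.2 = v.2 * w.1 := by
  by_contra hne
  refine hL (ContinuousLinearMap.ext fun u => ?_)
  have hu : (v.1 * w.2 - v.2 * w.1) • u =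
      (u.1 * w.2 - u.2 * w.1) • v + (u.2 * v.1 - u.1 * v.2) • w := by
    ext <;> simp <;> ring
  have hLu : (v.1 * w.2 - v.2 * w.1) • L u = 0 := by
    rw [← map_smul, hu, map_add, map_smul, map_smul, hv, hw, smul_zero, smul_zero, add_zero]
  exact (smul_eq_zero.1 hLu).resolve_left (sub_ne_zero.2 hne)

theorem IsNullVF.contDiffAt (hη : IsNullVF f η) : ContDiffAt ℝ ∞ η 0 := by
  obtain ⟨-, U, hU, hηU, -⟩ := hη
  exact hηU.contDiffAt hU

theorem IsNullVF.eventually (hη : IsNullVF f η) :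
    ∀ᶠ p in 𝓝 0, jacDet f p = 0 → fderiv ℝ f p (η p) = 0 := by
  obtain ⟨-, U, hU, -, hker⟩ := hη
  exact eventually_of_mem hU hker

theorem IsCoordChange.exists_related_vectorField (hφ : IsCoordChange φ)
    (hη : ContDiffAt ℝ ∞ η 0) (hη0 : η 0 ≠ 0) :
    ∃ ξ : ℝ × ℝ → ℝ × ℝ, ContDiffAt ℝ ∞ ξ 0 ∧ ξ 0 ≠ 0 ∧
      ∀ᶠ p in 𝓝 0, fderiv ℝ φ p (ξ p) = η (φ p) := by
  have hinv := hφ.eventually_isInvertible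
  have hrel : ∀ᶠ p in 𝓝 0, fderiv ℝ φ p (VectorField.pullback ℝ φ η p) = η (φ p) := by
    filter_upwards [hinv] with p hp
    exact hp.self_apply_inverse _
  refine ⟨VectorField.pullback ℝ φ η, ?_, fun h0 => hη0 ?_, hrel⟩
  · have hη' : ContDiffAt ℝ ∞ η (φ 0) := by rwa [hφ.map_zero]
    exact (hinv.self_of_nhds.contDiffAt_map_inverse.comp 0
      (hφ.contDiff.contDiffAt.fderiv_right le_rfl)).clm_apply
      (hη'.comp 0 hφ.contDiff.contDiffAt)
  · simpa [h0, hφ.map_zero] using hrel.self_of_nhds.symm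

end JacobianDeterminant

section AEquiv

variable {f g η ζ φ ψ : ℝ × ℝ → ℝ × ℝ} {k : ℕ}

theorem aEquiv_iff : AEquiv f g ↔
    ∃ φ ψ, IsCoordChange φ ∧ IsCoordChange ψ ∧ ψ ∘ f ∘ φ =ᶠ[𝓝 0] g := by
  refine ⟨?_, ?_⟩
  · rintro ⟨φ, ψ, hφ, hψ, hφ0, hψ0, hφ', hψ', e⟩
    exact ⟨φ, ψ, ⟨hφ, hφ0, hφ'⟩, ⟨hψ, hψ0, hψ'⟩, e⟩
  · rintro ⟨φ, ψ, hφ, hψ, e⟩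
    exact ⟨φ, ψ, hφ.contDiff, hψ.contDiff, hφ.map_zero, hψ.map_zero, hφ.bijective, hψ.bijective, e⟩

theorem jetEquiv_iff {r : ℕ} : JetEquiv r f g ↔
    ∃ φ ψ, IsCoordChange φ ∧ IsCoordChange ψ ∧
      ∀ i ≤ r, iteratedFDeriv ℝ i (ψ ∘ f ∘ φ) 0 = iteratedFDeriv ℝ i g 0 := by
  refine ⟨?_, ?_⟩
  · rintro ⟨φ, ψ, hφ, hψ, hφ0, hψ0, hφ', hψ', e⟩
    exact ⟨φ, ψ, ⟨hφ, hφ0, hφ'⟩, ⟨hψ, hψ0, hψ'⟩, e⟩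
  · rintro ⟨φ, ψ, hφ, hψ, e⟩
    exact ⟨φ, ψ, hφ.contDiff, hψ.contDiff, hφ.map_zero, hψ.map_zero, hφ.bijective, hψ.bijective, e⟩

theorem AEquiv.trans {h : ℝ × ℝ → ℝ × ℝ} (hfg : AEquiv f g) (hgh : AEquiv g h) : AEquiv f h := by
  obtain ⟨φ, ψ, hφ, hψ, e⟩ := aEquiv_iff.1 hfg
  obtain ⟨φ', ψ', hφ', hψ', e'⟩ := aEquiv_iff.1 hgh
  refine aEquiv_iff.2 ⟨φ ∘ φ', ψ' ∘ ψ, hφ.comp hφ', hψ'.comp hψ, ?_⟩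
  filter_upwards [e', hφ'.tendsto.eventually e] with p hp' hp
  rw [← hp']
  exact congrArg ψ' hp

theorem exists_jacDet_eq_mul (hf : ContDiff ℝ ∞ f) (hφ : IsCoordChange φ) (hψ : IsCoordChange ψ)
    (hf0 : f 0 = 0) (e : ψ ∘ f ∘ φ =ᶠ[𝓝 0] g) : ∃ u : ℝ × ℝ → ℝ, ContDiffAt ℝ ∞ u 0 ∧ u 0 ≠ 0 ∧
      jacDet g =ᶠ[𝓝 0] u * (jacDet f ∘ φ) := by
  have hfφ : ContDiff ℝ ∞ (f ∘ φ) := hf.comp hφ.contDiff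
  refine ⟨(jacDet ψ ∘ f ∘ φ) * jacDet φ, ?_, ?_, ?_⟩
  · exact ((contDiffAt_jacDet hψ.contDiff.contDiffAt).comp 0 hfφ.contDiffAt).mul
      (contDiffAt_jacDet hφ.contDiff.contDiffAt)
  · simp only [Pi.mul_apply, comp_apply, hφ.map_zero, hf0]
    exact mul_ne_zero (jacDet_ne_zero_iff_bijective.2 hψ.bijective)
      (jacDet_ne_zero_iff_bijective.2 hφ.bijective)
  · filter_upwards [e.fderiv (𝕜 := ℝ)] with p hp
    have hjac : jacDet g p = jacDet (ψ ∘ f ∘ φ) p := by simp only [jacDet, hp]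
    rw [hjac, jacDet_comp (hψ.differentiable _) (hfφ.differentiable (by simp) p),
      jacDet_comp (hf.differentiable (by simp) _) (hφ.differentiable p)]
    simp only [Pi.mul_apply, comp_apply]
    ring

theorem fderiv_mul_eq_zero_iff {E : Type*} [NormedAddCommGroup E] [NormedSpace ℝ E] {u μ : E → ℝ}
    {x : E} (hu : DifferentiableAt ℝ u x) (hμ : DifferentiableAt ℝ μ x) (hux : u x ≠ 0)
    (hμx : μ x = 0) : fderiv ℝ (u * μ) x = 0 ↔ fderiv ℝ μ x = 0 := by
  rw [fderiv_mul hu hμ, hμx, zero_smul, add_zero, smul_eq_zero_iff_right hux]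

theorem IsCoordChange.fderiv_comp_eq_zero_iff {E : Type*} [NormedAddCommGroup E] [NormedSpace ℝ E]
    {μ : ℝ × ℝ → E} (hφ : IsCoordChange φ) (hμ : DifferentiableAt ℝ μ 0) :
    fderiv ℝ (μ ∘ φ) 0 = 0 ↔ fderiv ℝ μ 0 = 0 := by
  rw [← hφ.map_zero] at hμ
  rw [fderiv_comp 0 hμ (hφ.differentiable 0), hφ.map_zero]
  refine ⟨fun h => ContinuousLinearMap.ext fun w => ?_,
    fun h => by rw [h, ContinuousLinearMap.zero_comp]⟩
  obtain ⟨v, rfl⟩ := hφ.bijective.2 w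
  exact DFunLike.congr_fun h v

theorem IsCoordChange.fderiv_comp_left_eq_zero_iff (hψ : IsCoordChange ψ)
    (hf : DifferentiableAt ℝ f 0) (hf0 : f 0 = 0) : fderiv ℝ (ψ ∘ f) 0 = 0 ↔ fderiv ℝ f 0 = 0 := by
  rw [fderiv_comp 0 (hψ.differentiable _) hf, hf0]
  refine ⟨fun h => ContinuousLinearMap.ext fun v => hψ.bijective.1 ?_,
    fun h => by rw [h, ContinuousLinearMap.comp_zero]⟩
  simpa using DFunLike.congr_fun h v

theorem CorankOne.eventually_fderiv_ne_zero (hcr : CorankOne f) (hf : ContDiff ℝ ∞ f)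
    (hf0 : f 0 = 0) (hg : ContDiff ℝ ∞ g) (hfg : AEquiv f g) : ∀ᶠ p in 𝓝 0, fderiv ℝ g p ≠ 0 := by
  obtain ⟨φ, ψ, hφ, hψ, e⟩ := aEquiv_iff.1 hfg
  have hg0 : fderiv ℝ g 0 ≠ 0 := by
    rw [← e.fderiv_eq, ← Function.comp_assoc, Ne, hφ.fderiv_comp_eq_zero_iff
      ((hψ.contDiff.comp hf).differentiable (by simp) 0),
      hψ.fderiv_comp_left_eq_zero_iff (hf.differentiable (by simp) 0) hf0]
    exact hcr.fderiv_ne_zero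
  exact (hg.continuous_fderiv (by simp)).continuousAt.eventually_ne hg0

theorem AEquiv.fderiv_jacDet_eq_zero_iff (hf : ContDiff ℝ ∞ f) (hf0 : f 0 = 0)
    (hjac0 : jacDet f 0 = 0) (hfg : AEquiv f g) :
    fderiv ℝ (jacDet g) 0 = 0 ↔ fderiv ℝ (jacDet f) 0 = 0 := by
  obtain ⟨φ, ψ, hφ, hψ, e⟩ := aEquiv_iff.1 hfg
  obtain ⟨u, hu, hu0, hjac⟩ := exists_jacDet_eq_mul hf hφ hψ hf0 e
  have hdiff (p) : DifferentiableAt ℝ (jacDet f) p :=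
    (contDiffAt_jacDet hf.contDiffAt).differentiableAt (by simp)
  rw [hjac.fderiv_eq, fderiv_mul_eq_zero_iff (hu.differentiableAt (by simp))
    ((hdiff _).comp 0 (hφ.differentiable 0)) hu0 (by simp [hφ.map_zero, hjac0]),
    hφ.fderiv_comp_eq_zero_iff (hdiff 0)]

theorem AEquiv.vanishesAlong_jacDet_iff (hf : ContDiff ℝ ∞ f) (hf0 : f 0 = 0) (hcr : CorankOne f)
    (hg : ContDiff ℝ ∞ g) (hη : IsNullVF f η) (hζ : IsNullVF g ζ) (hfg : AEquiv f g)
    (hd : fderiv ℝ (jacDet f) 0 ≠ 0) :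
    VanishesAlong ζ 0 k (jacDet g) ↔ VanishesAlong η 0 k (jacDet f) := by
  have hdg := hcr.eventually_fderiv_ne_zero hf hf0 hg hfg
  obtain ⟨φ, ψ, hφ, hψ, e⟩ := aEquiv_iff.1 hfg
  obtain ⟨u, hu, hu0, hjac⟩ := exists_jacDet_eq_mul hf hφ hψ hf0 e
  obtain ⟨ξ, hξ, hξ0, hrel⟩ := hφ.exists_related_vectorField hη.contDiffAt hη.1
  have hjacf : ContDiffAt ℝ ∞ (jacDet f) (φ 0) := contDiffAt_jacDet hf.contDiffAt
  have hμ : ContDiffAt ℝ ∞ (jacDet f ∘ φ) 0 := hjacf.comp 0 hφ.contDiff.contDiffAt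
  have hdμ : fderiv ℝ (jacDet f ∘ φ) 0 ≠ 0 := by
    rwa [Ne, hφ.fderiv_comp_eq_zero_iff
      ((contDiffAt_jacDet hf.contDiffAt).differentiableAt (by simp))]
  have hpar : ∀ᶠ p in 𝓝 0, (jacDet f ∘ φ) p = 0 → (ζ p).1 * (ξ p).2 = (ζ p).2 * (ξ p).1 := by
    filter_upwards [hdg, hjac, hζ.eventually, hφ.tendsto.eventually hη.eventually, hrel,
      e.fderiv (𝕜 := ℝ)] with p hgp hjacp hζp hηp hξp ep hμp
    refine fst_mul_snd_eq_of_map_eq_zero hgp (hζp (by rw [hjacp, Pi.mul_apply, hμp, mul_zero])) ?_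
    rw [← ep, fderiv_comp p (hψ.differentiable _)
        ((hf.comp hφ.contDiff).differentiable (by simp) p),
      fderiv_comp p (hf.differentiable (by simp) _) (hφ.differentiable p)]
    simp [hξp, hηp hμp]
  calc VanishesAlong ζ 0 k (jacDet g)
    _ ↔ VanishesAlong ζ 0 k (u * (jacDet f ∘ φ)) :=
      ⟨fun h => h.congr hjac, fun h => h.congr hjac.symm⟩
    _ ↔ VanishesAlong ζ 0 k (jacDet f ∘ φ) := VanishesAlong.mul_left_iff hζ.contDiffAt hu hu0 hμ
    _ ↔ VanishesAlong ξ 0 k (jacDet f ∘ φ) :=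
      vanishesAlong_iff_of_parallel hζ.contDiffAt hξ hζ.1 hξ0 hμ hdμ hpar
    _ ↔ VanishesAlong η 0 k (jacDet f) := by
      rw [vanishesAlong_comp_iff_of_related (hφ.contDiff.contDiffAt.of_le (mod_cast le_top))
        (hφ.map_zero.symm ▸ hη.contDiffAt) hjacf hrel, hφ.map_zero]

/-- The criterion for a Morin singularity of type `A_k`, in terms of a null vector field `η`: the
singular set `jacDet f = 0` is a regular curve at the origin and has contact of order exactly `k`
there with the integral curve of `η`. -/
def HasNullContact (f η : ℝ × ℝ → ℝ × ℝ) (k : ℕ) : Prop :=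
  fderiv ℝ (jacDet f) 0 ≠ 0 ∧ VanishesAlong η 0 k (jacDet f) ∧ etaIter η k (jacDet f) 0 ≠ 0

theorem hasNullContact_iff_vanishesAlong :
    HasNullContact f η k ↔ fderiv ℝ (jacDet f) 0 ≠ 0 ∧
      VanishesAlong η 0 k (jacDet f) ∧ ¬ VanishesAlong η 0 (k + 1) (jacDet f) := by
  simp only [HasNullContact, VanishesAlong, Nat.forall_lt_succ_right]
  tauto

theorem AEquiv.hasNullContact_iff (hf : ContDiff ℝ ∞ f) (hf0 : f 0 = 0) (hcr : CorankOne f)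
    (hg : ContDiff ℝ ∞ g) (hη : IsNullVF f η) (hζ : IsNullVF g ζ) (hfg : AEquiv f g) :
    HasNullContact g ζ k ↔ HasNullContact f η k := by
  rw [hasNullContact_iff_vanishesAlong, hasNullContact_iff_vanishesAlong, Ne, Ne,
    hfg.fderiv_jacDet_eq_zero_iff hf hf0 hcr.jacDet_eq_zero]
  refine and_congr_right fun hd => ?_
  simp only [hfg.vanishesAlong_jacDet_iff hf hf0 hcr hg hη hζ hd]

end AEquiv

section Flat

variable {D E F G : Type*} [NormedAddCommGroup D] [NormedSpace ℝ D] [NormedAddCommGroup E]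
  [NormedSpace ℝ E] [NormedAddCommGroup F] [NormedSpace ℝ F] [NormedAddCommGroup G]
  [NormedSpace ℝ G]

/-- All derivatives of `g` at the origin of order less than `n` vanish: `g` belongs to the `n`-th
power of the maximal ideal of germs. -/
def IsFlat (n : ℕ) (g : E → F) : Prop :=
  ∀ i < n, iteratedFDeriv ℝ i g 0 = 0

theorem isFlat_sub_iff {n : ℕ} {g h : E → F} (hg : ContDiff ℝ ∞ g) (hh : ContDiff ℝ ∞ h) :
    IsFlat n (g - h) ↔ ∀ i < n, iteratedFDeriv ℝ i g 0 = iteratedFDeriv ℝ i h 0 := by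
  refine forall₂_congr fun i _ => ?_
  rw [iteratedFDeriv_sub_apply (hg.contDiffAt.of_le (mod_cast le_top))
    (hh.contDiffAt.of_le (mod_cast le_top)), sub_eq_zero]

theorem isFlat_one_iff {g : E → F} : IsFlat 1 g ↔ g 0 = 0 := by
  simp only [IsFlat, Nat.lt_one_iff, forall_eq]
  rw [← norm_eq_zero, norm_iteratedFDeriv_zero, norm_eq_zero]

namespace IsFlat

variable {m n : ℕ}

theorem apply_zero {g : E → F} (hg : IsFlat n g) (hn : 1 ≤ n) : g 0 = 0 :=
  isFlat_one_iff.1 fun i hi => hg i (hi.trans_le hn)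

protected theorem congr {g h : E → F} (hg : IsFlat n g) (e : g =ᶠ[𝓝 0] h) : IsFlat n h :=
  fun i hi => by rw [← (e.iteratedFDeriv ℝ i).eq_of_nhds, hg i hi]

protected theorem sub {g h : E → F} (hg : ContDiff ℝ ∞ g) (hh : ContDiff ℝ ∞ h) (hgn : IsFlat n g)
    (hhn : IsFlat n h) : IsFlat n (g - h) :=
  (isFlat_sub_iff hg hh).2 fun i hi => by rw [hgn i hi, hhn i hi]

protected theorem mul {g h : E → ℝ} (hg : ContDiff ℝ ∞ g) (hh : ContDiff ℝ ∞ h) (hgm : IsFlat m g)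
    (hhn : IsFlat n h) : IsFlat (m + n) (g * h) := by
  intro i hi
  refine norm_le_zero_iff.1 ((norm_iteratedFDeriv_mul_le hg hh 0 (mod_cast le_top)).trans_eq ?_)
  refine Finset.sum_eq_zero fun j hji => ?_
  have hji' := Finset.mem_range_succ_iff.1 hji
  rcases lt_or_ge j m with hj | hj
  · rw [hgm j hj, norm_zero, mul_zero, zero_mul]
  · rw [hhn (i - j) (by omega), norm_zero, mul_zero]

protected theorem pow {g : E → ℝ} (hg : ContDiff ℝ ∞ g) (hg1 : IsFlat 1 g) (n : ℕ) :
    IsFlat n (g ^ n) := by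
  induction n with
  | zero => exact fun i hi => absurd hi i.not_lt_zero
  | succ n ih => exact ih.mul (hg.pow n) hg hg1

theorem clm_comp {g : E → F} (L : F →L[ℝ] G) (hg : ContDiff ℝ ∞ g) (hgn : IsFlat n g) :
    IsFlat n (L ∘ g) := by
  intro i hi
  rw [L.iteratedFDeriv_comp_left hg.contDiffAt (mod_cast le_top), hgn i hi]
  ext
  simp

protected theorem comp {g : E → F} {φ : D → E} (hg : ContDiff ℝ ∞ g) (hφ : ContDiff ℝ ∞ φ)
    (hφ0 : φ 0 = 0) (hgn : IsFlat n g) : IsFlat n (g ∘ φ) := by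
  intro i hi
  let C := ∑ j ∈ Finset.range (i + 1), ‖iteratedFDeriv ℝ j φ 0‖
  have hC (j) (hj : j ≤ i) : ‖iteratedFDeriv ℝ j φ 0‖ ≤ C :=
    Finset.single_le_sum (f := fun j => ‖iteratedFDeriv ℝ j φ 0‖) (fun _ _ => norm_nonneg _)
      (Finset.mem_range_succ_iff.2 hj)
  have hC0 : 0 ≤ C := (norm_nonneg _).trans (hC 0 i.zero_le)
  have hpow (j) (hj : 1 ≤ j) (hji : j ≤ i) : ‖iteratedFDeriv ℝ j φ 0‖ ≤ (1 + C) ^ j := by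
    have hle : 1 + C ≤ (1 + C) ^ j := le_self_pow₀ (by linarith) (by omega)
    linarith [hC j hji]
  have hbound := norm_iteratedFDeriv_comp_le hg hφ (mod_cast le_top : (i : WithTop ℕ∞) ≤ ∞) 0
    (C := 0) (fun j hj => by rw [hφ0, hgn j (by omega), norm_zero]) hpow
  simpa using hbound

theorem comp_sub_comp {g : E → F} {φ₁ φ₂ : D → E} (hg : ContDiff ℝ ∞ g) (hφ₁ : ContDiff ℝ ∞ φ₁)
    (hφ₂ : ContDiff ℝ ∞ φ₂) (hφ : IsFlat n (φ₁ - φ₂)) : IsFlat n (g ∘ φ₁ - g ∘ φ₂) := by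
  have hjet := (isFlat_sub_iff hφ₁ hφ₂).1 hφ
  refine (isFlat_sub_iff (hg.comp hφ₁) (hg.comp hφ₂)).2 fun i hi => ?_
  have h0 : φ₁ 0 = φ₂ 0 := sub_eq_zero.1 (hφ.apply_zero (by omega))
  rw [iteratedFDeriv_comp hg.contDiffAt hφ₁.contDiffAt (mod_cast le_top),
    iteratedFDeriv_comp hg.contDiffAt hφ₂.contDiffAt (mod_cast le_top), h0]
  refine Finset.sum_congr rfl fun c _ => congrArg _ (funext fun j => ?_)
  exact hjet _ ((c.partSize_le j).trans_lt hi)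

protected theorem fderiv {g : E → F} (hgn : IsFlat (n + 1) g) : IsFlat n (fderiv ℝ g) := by
  intro i hi
  have hsucc := hgn (i + 1) (by omega)
  rw [iteratedFDeriv_succ_eq_comp_right] at hsucc
  exact (LinearIsometryEquiv.map_eq_zero_iff _).1 hsucc

protected theorem dop {g : ℝ × ℝ → ℝ} (v : ℝ × ℝ) (hg : ContDiff ℝ ∞ g) (hgn : IsFlat (n + 1) g) :
    IsFlat n (dop v g) :=
  hgn.fderiv.clm_comp (ContinuousLinearMap.apply ℝ ℝ v) (hg.fderiv_right le_rfl)

theorem isCoordChange {φ : E → E} (hφ : ContDiff ℝ ∞ φ) (hφ2 : IsFlat 2 (φ - id)) :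
    IsCoordChange φ := by
  have hfderiv : fderiv ℝ φ 0 = .id ℝ E := by
    rw [← sub_eq_zero, ← fderiv_id,
      ← fderiv_sub (hφ.differentiable (by simp) 0) differentiableAt_id]
    exact hφ2.fderiv.apply_zero le_rfl
  refine ⟨hφ, sub_eq_zero.1 (hφ2.apply_zero one_le_two), ?_⟩
  rw [hfderiv]
  exact Function.bijective_id

theorem iteratedDeriv_eq_zero {g : ℝ → F} (hg : IsFlat n g) {i : ℕ} (hi : i < n) :
    iteratedDeriv i g 0 = 0 := by
  rw [iteratedDeriv_eq_iteratedFDeriv, hg i hi, zero_apply]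

end IsFlat

end Flat

section GraphMap

variable {f φ ψ Φ : ℝ × ℝ → ℝ × ℝ} {q : ℝ × ℝ → ℝ}

/-- The map `(x, y) ↦ (x, q(x, y))`, the shape to which every corank one germ can be brought. -/
def graphMap (q : ℝ × ℝ → ℝ) : ℝ × ℝ → ℝ × ℝ :=
  fun p => (p.1, q p)

theorem contDiff_graphMap (hq : ContDiff ℝ ∞ q) : ContDiff ℝ ∞ (graphMap q) :=
  contDiff_fst.prodMk hq

theorem jacDet_prodMk {X Y : ℝ × ℝ → ℝ} {p : ℝ × ℝ} (hX : DifferentiableAt ℝ X p)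
    (hY : DifferentiableAt ℝ Y p) : jacDet (fun p => (X p, Y p)) p =
      pdx X p * pdy Y p - pdx Y p * pdy X p := by
  simp [jacDet, pdx, pdy, dop, DifferentiableAt.fderiv_prodMk hX hY]

theorem jacDet_graphMap (hq : ContDiff ℝ ∞ q) : jacDet (graphMap q) = pdy q := by
  funext p
  refine (jacDet_prodMk differentiableAt_fst (hq.differentiable (by simp) p)).trans ?_
  simp [pdx, pdy, dop, fderiv_fst]

theorem isNullVF_graphMap (hq : ContDiff ℝ ∞ q) : IsNullVF (graphMap q) fun _ => (0, 1) := by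
  refine ⟨by simp, Set.univ, univ_mem, contDiffOn_const, fun p _ hp => ?_⟩
  rw [jacDet_graphMap hq] at hp
  have hfderiv : fderiv ℝ (graphMap q) p = _ :=
    DifferentiableAt.fderiv_prodMk differentiableAt_fst (hq.differentiable (by simp) p)
  simpa [hfderiv, fderiv_fst, pdy, dop] using hp

theorem isCoordChange_prodMk {X Y : ℝ × ℝ → ℝ} (hX : ContDiff ℝ ∞ X) (hY : ContDiff ℝ ∞ Y)
    (hX0 : X 0 = 0) (hY0 : Y 0 = 0) (hXY : pdx X 0 * pdy Y 0 - pdx Y 0 * pdy X 0 ≠ 0) :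
    IsCoordChange fun p => (X p, Y p) := by
  refine ⟨hX.prodMk hY, by simp [hX0, hY0], jacDet_ne_zero_iff_bijective.1 ?_⟩
  rwa [jacDet_prodMk (hX.differentiable (by simp) 0) (hY.differentiable (by simp) 0)]

theorem exists_isCoordChange_fst_eq {X : ℝ × ℝ → ℝ} (hX : ContDiff ℝ ∞ X) (hX0 : X 0 = 0)
    (hdX : fderiv ℝ X 0 ≠ 0) : ∃ Φ, IsCoordChange Φ ∧ ∀ p, (Φ p).1 = X p := by
  let Y : ℝ × ℝ →L[ℝ] ℝ := pdx X 0 • ContinuousLinearMap.snd ℝ ℝ ℝ -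
    pdy X 0 • ContinuousLinearMap.fst ℝ ℝ ℝ
  refine ⟨fun p => (X p, Y p), isCoordChange_prodMk hX Y.contDiff hX0 (map_zero Y) fun h0 => ?_,
    fun _ => rfl⟩
  have hsq : pdx X 0 * pdx X 0 + pdy X 0 * pdy X 0 = 0 := by
    simp only [pdx, pdy, dop, show fderiv ℝ Y 0 = Y from Y.fderiv] at h0
    simpa [Y, pdx, pdy, dop] using h0
  have hx : fderiv ℝ X 0 (1, 0) = 0 := (mul_self_add_mul_self_eq_zero.1 hsq).1
  have hy : fderiv ℝ X 0 (0, 1) = 0 := (mul_self_add_mul_self_eq_zero.1 hsq).2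
  refine hdX (ContinuousLinearMap.ext fun v => ?_)
  have hv : v = v.1 • ((1, 0) : ℝ × ℝ) + v.2 • ((0, 1) : ℝ × ℝ) := by ext <;> simp
  rw [hv, map_add, map_smul, map_smul, hx, hy]
  simp

theorem exists_aEquiv_graphMap_of_fst_eq (hf : ContDiff ℝ ∞ f) (hφ : IsCoordChange φ)
    (hψ : IsCoordChange ψ) (hΦ : IsCoordChange Φ) (hfst : ∀ p, (Φ p).1 = (ψ (f (φ p))).1) :
    ∃ q : ℝ × ℝ → ℝ, ContDiff ℝ ∞ q ∧ q 0 = (ψ (f 0)).2 ∧ AEquiv f (graphMap q) ∧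
      ∀ n m, ContDiff ℝ ∞ m → IsFlat n (fun p => (ψ (f (φ p))).2 - m (Φ p)) → IsFlat n (q - m) := by
  obtain ⟨χ, hχ, hΦχ⟩ := hΦ.exists_rightInverse
  have hsnd : ContDiff ℝ ∞ fun p => (ψ (f (φ p))).2 :=
    (hψ.contDiff.comp (hf.comp hφ.contDiff)).snd
  refine ⟨fun p => (ψ (f (φ (χ p)))).2, hsnd.comp hχ.contDiff,
    by simp [hχ.map_zero, hφ.map_zero],
    aEquiv_iff.2 ⟨φ ∘ χ, ψ, hφ.comp hχ, hψ, ?_⟩, fun n m hm hn => ?_⟩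
  · filter_upwards [hΦχ] with p hp
    exact Prod.ext (by simp [graphMap, ← hfst, hp]) rfl
  · refine (hn.comp (hsnd.sub (hm.comp hΦ.contDiff)) hχ.contDiff hχ.map_zero).congr ?_
    filter_upwards [hΦχ] with p hp
    simp [hp]

theorem CorankOne.exists_aEquiv_graphMap (hcr : CorankOne f) (hf : ContDiff ℝ ∞ f)
    (hf0 : f 0 = 0) :
    ∃ q : ℝ × ℝ → ℝ, ContDiff ℝ ∞ q ∧ q 0 = 0 ∧ AEquiv f (graphMap q) := by
  obtain ⟨v, hv : fderiv ℝ f 0 v ≠ 0⟩ := DFunLike.ne_iff.1 hcr.fderiv_ne_zero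
  obtain ⟨l, hl⟩ := SeparatingDual.exists_ne_zero (R := ℝ) hv
  have hl0 : l ≠ 0 := fun h => hl (by simp [h])
  obtain ⟨ψ, hψ, hψl⟩ := exists_isCoordChange_fst_eq l.contDiff (map_zero l) (by simpa using hl0)
  have hdlf : fderiv ℝ (l ∘ f) 0 ≠ 0 := fun h => hl <| by
    rw [fderiv_comp 0 l.differentiableAt (hf.differentiable (by simp) 0), l.fderiv] at h
    exact DFunLike.congr_fun h v
  obtain ⟨Φ, hΦ, hΦl⟩ := exists_isCoordChange_fst_eq (l.contDiff.comp hf) (by simp [hf0]) hdlf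
  obtain ⟨q, hq, hq0, hfq, -⟩ := exists_aEquiv_graphMap_of_fst_eq hf .id hψ hΦ fun p => by
    rw [hΦl, hψl, comp_apply, id]
  exact ⟨q, hq, by rw [hq0, hf0, hψ.map_zero, Prod.snd_zero], hfq⟩

end GraphMap

section MorinType

variable {g q m : ℝ × ℝ → ℝ} {k : ℕ}

theorem contDiff_dop (v : ℝ × ℝ) (hg : ContDiff ℝ ∞ g) : ContDiff ℝ ∞ (dop v g) :=
  (hg.fderiv_right le_rfl).clm_apply contDiff_const

theorem dop_sub (v : ℝ × ℝ) (hg : ContDiff ℝ ∞ g) (hq : ContDiff ℝ ∞ q) :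
    dop v (g - q) = dop v g - dop v q := by
  funext p
  simp [dop, fderiv_sub (hg.differentiable (by simp) p) (hq.differentiable (by simp) p)]

theorem pdx_eq_deriv (hg : ContDiff ℝ ∞ g) (p : ℝ × ℝ) :
    pdx g p = deriv (fun x => g (x, p.2)) p.1 :=
  ((hg.differentiable (by simp) p).hasFDerivAt.comp_hasDerivAt p.1
    ((hasDerivAt_id p.1).prodMk (hasDerivAt_const p.1 p.2))).deriv.symm

theorem pdy_eq_deriv (hg : ContDiff ℝ ∞ g) (p : ℝ × ℝ) :
    pdy g p = deriv (fun y => g (p.1, y)) p.2 :=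
  ((hg.differentiable (by simp) p).hasFDerivAt.comp_hasDerivAt p.2
    ((hasDerivAt_const p.2 p.1).prodMk (hasDerivAt_id p.2))).deriv.symm

theorem etaIter_const_zero_one (hg : ContDiff ℝ ∞ g) (k : ℕ) (p : ℝ × ℝ) :
    etaIter (fun _ => (0, 1)) k g p = iteratedDeriv k (fun y => g (p.1, y)) p.2 := by
  induction k generalizing g p with
  | zero => simp [etaIter]
  | succ k ih =>
    rw [etaIter_succ', iteratedDeriv_succ']
    refine (ih (contDiff_dop (0, 1) hg) p).trans ?_
    exact congrArg (iteratedDeriv k · p.2) (funext fun y => pdy_eq_deriv hg (p.1, y))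

/-- The two conditions under which `(x, y) ↦ (x, g (x, y))` will be shown to be a Morin singularity
of type `A_k`: the restriction of `g` to the `y`-axis has a critical point of multiplicity exactly
`k` at the origin, and `g` unfolds it in the `x`-direction with nonzero speed. -/
def HasMorinType (k : ℕ) (g : ℝ × ℝ → ℝ) : Prop :=
  pdx (pdy g) 0 ≠ 0 ∧ (∀ i < k, iteratedDeriv (i + 1) (fun y => g (0, y)) 0 = 0) ∧
    iteratedDeriv (k + 1) (fun y => g (0, y)) 0 ≠ 0

theorem HasMorinType.of_isFlat_sub (hk : 1 ≤ k) (hm : ContDiff ℝ ∞ m) (hq : ContDiff ℝ ∞ q)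
    (hflat : IsFlat (k + 2) (q - m)) (hmk : HasMorinType k m) : HasMorinType k q := by
  have haxis (i) (hi : i < k + 2) :
      iteratedDeriv i (fun y => q (0, y)) 0 = iteratedDeriv i (fun y => m (0, y)) 0 := by
    have hinr : ContDiff ℝ ∞ fun y : ℝ => ((0, y) : ℝ × ℝ) := contDiff_const.prodMk contDiff_id
    have hsub := (hflat.comp (hq.sub hm) hinr rfl).iteratedDeriv_eq_zero hi
    have hqi : ContDiff ℝ ∞ fun y => q (0, y) := hq.comp hinr
    have hmi : ContDiff ℝ ∞ fun y => m (0, y) := hm.comp hinr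
    rw [← sub_eq_zero, ← iteratedDeriv_sub (hqi.contDiffAt.of_le (mod_cast le_top))
      (hmi.contDiffAt.of_le (mod_cast le_top))]
    exact hsub
  have hmixed : pdx (pdy q) 0 = pdx (pdy m) 0 := by
    have hqm : ContDiff ℝ ∞ (q - m) := hq.sub hm
    have hsub : dop (1, 0) (dop (0, 1) (q - m)) 0 = 0 :=
      (hflat.dop (0, 1) hqm).dop (1, 0) (contDiff_dop _ hqm) |>.apply_zero hk
    rw [dop_sub _ hq hm, dop_sub _ (contDiff_dop _ hq) (contDiff_dop _ hm)] at hsub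
    exact sub_eq_zero.1 hsub
  obtain ⟨hmix, hvan, hne⟩ := hmk
  refine ⟨hmixed ▸ hmix, fun i hi => ?_, ?_⟩
  · rw [haxis _ (by omega), hvan i hi]
  · rwa [haxis _ (by omega)]

theorem hasNullContact_graphMap_iff (hk : 2 ≤ k) (hq : ContDiff ℝ ∞ q) :
    HasNullContact (graphMap q) (fun _ => (0, 1)) k ↔ HasMorinType k q := by
  have hetaIter (i) : etaIter (fun _ => (0, 1)) i (pdy q) 0 =
      iteratedDeriv (i + 1) (fun y => q (0, y)) 0 :=
    (congrFun (etaIter_succ' (fun _ => (0, 1)) i q) 0).symm.trans (etaIter_const_zero_one hq _ 0)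
  rw [HasNullContact, HasMorinType, jacDet_graphMap hq, VanishesAlong]
  simp only [hetaIter]
  refine and_congr_left fun ⟨hvan, _⟩ => not_congr ⟨fun h0 => DFunLike.congr_fun h0 (1, 0), ?_⟩
  intro hmix
  have hyy : fderiv ℝ (pdy q) 0 (0, 1) = 0 := (hetaIter 1).trans (hvan 1 (by omega))
  have hxy : fderiv ℝ (pdy q) 0 (1, 0) = 0 := hmix
  exact ContinuousLinearMap.prod_ext (ContinuousLinearMap.ext_ring hxy)
    (ContinuousLinearMap.ext_ring hyy)

end MorinType

section Hadamard

open MeasureTheory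

universe u

variable {E F : Type u} [NormedAddCommGroup E] [NormedSpace ℝ E] [NormedAddCommGroup F]
  [NormedSpace ℝ F]

theorem hasFDerivAt_parametric_intervalIntegral [ProperSpace E] {f : E × ℝ → F}
    (hf : ContDiff ℝ 1 f) (a b : ℝ) (x : E) :
    HasFDerivAt (fun x => ∫ t in a..b, f (x, t))
      (∫ t in a..b, fderiv ℝ f (x, t) ∘L .inl ℝ E ℝ) x := by
  have hcont (y : E) : Continuous fun t => f (y, t) :=
    hf.continuous.comp (continuous_const.prodMk continuous_id)
  have hcont' : Continuous fun p : E × ℝ => fderiv ℝ f p ∘L .inl ℝ E ℝ :=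
    (hf.continuous_fderiv one_ne_zero).clm_comp continuous_const
  obtain ⟨C, hC⟩ := ((isCompact_closedBall x 1).prod (isCompact_uIcc (a := a)
    (b := b))).exists_bound_of_continuousOn hcont'.continuousOn
  refine intervalIntegral.hasFDerivAt_integral_of_dominated_of_fderiv_le (bound := fun _ => C)
    (F' := fun y t => fderiv ℝ f (y, t) ∘L .inl ℝ E ℝ) (Metric.closedBall_mem_nhds x one_pos)
    (.of_forall fun y => (hcont y).aestronglyMeasurable) ((hcont x).intervalIntegrable a b)
    (hcont'.comp (continuous_const.prodMk continuous_id)).aestronglyMeasurable ?_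
    intervalIntegrable_const ?_
  · exact .of_forall fun t ht y hy => hC (y, t) ⟨hy, Set.uIoc_subset_uIcc ht⟩
  · exact .of_forall fun t _ y _ => ((hf.differentiable one_ne_zero (y, t)).hasFDerivAt).comp y
      (hasFDerivAt_prodMk_left y t)

theorem contDiff_parametric_intervalIntegral [ProperSpace E] {n : ℕ} {f : E × ℝ → F}
    (hf : ContDiff ℝ n f) (a b : ℝ) : ContDiff ℝ n fun x => ∫ t in a..b, f (x, t) := by
  induction n generalizing F with
  | zero =>
    rw [Nat.cast_zero, contDiff_zero] at hf ⊢
    exact intervalIntegral.continuous_parametric_intervalIntegral_of_continuous'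
      (f := fun x t => f (x, t)) hf a b
  | succ n ih =>
    have hf1 : ContDiff ℝ 1 f := hf.of_le (by exact_mod_cast Nat.le_add_left 1 n)
    have hdf : ContDiff ℝ n fun p => fderiv ℝ f p ∘L .inl ℝ E ℝ :=
      (hf.fderiv_right (by norm_cast)).clm_comp contDiff_const
    exact contDiff_succ_iff_hasFDerivAt.2 ⟨_, ih hdf,
      hasFDerivAt_parametric_intervalIntegral hf1 a b⟩

theorem exists_contDiff_eq_smul {f : ℝ × E → F} [ProperSpace E] [CompleteSpace F]
    (hf : ContDiff ℝ ∞ f) (hf0 : ∀ y, f (0, y) = 0) :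
    ∃ h : ℝ × E → F, ContDiff ℝ ∞ h ∧ ∀ x y, f (x, y) = x • h (x, y) := by
  have hdf : ContDiff ℝ ∞ fun p : ℝ × E => fderiv ℝ f p (1, 0) :=
    (hf.fderiv_right le_rfl).clm_apply contDiff_const
  have hscale : ContDiff ℝ ∞ fun p : (ℝ × E) × ℝ => (p.2 * p.1.1, p.1.2) :=
    (contDiff_snd.mul contDiff_fst.fst).prodMk contDiff_fst.snd
  refine ⟨fun p => ∫ t in (0 : ℝ)..1, fderiv ℝ f (t * p.1, p.2) (1, 0), ?_, fun x y => ?_⟩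
  · exact contDiff_infty.2 fun n => contDiff_parametric_intervalIntegral
      ((hdf.comp hscale).of_le (mod_cast le_top)) 0 1
  · have hderiv (t : ℝ) :
        HasDerivAt (fun t => f (t * x, y)) (x • fderiv ℝ f (t * x, y) (1, 0)) t := by
      have hline := ((hasDerivAt_id t).mul_const x).prodMk (hasDerivAt_const t y)
      have hcomp := (hf.differentiable (by simp) (t * x, y)).hasFDerivAt.comp_hasDerivAt t hline
      rw [← map_smul]
      simpa [comp_def] using hcomp
    have hcont : Continuous fun t : ℝ => x • fderiv ℝ f (t * x, y) (1, 0) := by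
      have hpath : Continuous fun t : ℝ => (t * x, y) := by fun_prop
      exact continuous_const.smul (hdf.continuous.comp hpath)
    have hftc := intervalIntegral.integral_eq_sub_of_hasDerivAt (fun t _ => hderiv t)
      (hcont.intervalIntegrable 0 1)
    rw [intervalIntegral.integral_smul, one_mul, zero_mul, hf0, sub_zero] at hftc
    exact hftc.symm

theorem iteratedDeriv_succ_id_mul {h : ℝ → ℝ} (hh : ContDiff ℝ ∞ h) (i : ℕ) :
    iteratedDeriv (i + 1) (fun y => y * h y) 0 = (i + 1) * iteratedDeriv i h 0 := by
  rw [iteratedDeriv_fun_mul contDiffAt_fun_id (hh.contDiffAt.of_le (mod_cast le_top)),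
    Finset.sum_eq_single 1]
  · simp [iteratedDeriv_fun_id]
  · intro j _ hj
    simp [iteratedDeriv_fun_id, hj]
  · simp

theorem exists_contDiff_eq_pow_mul {n : ℕ} {f : ℝ → ℝ} (hf : ContDiff ℝ ∞ f)
    (hf0 : ∀ i < n, iteratedDeriv i f 0 = 0) : ∃ h : ℝ → ℝ, ContDiff ℝ ∞ h ∧
      (∀ y, f y = y ^ n * h y) ∧ iteratedDeriv n f 0 = n.factorial * h 0 := by
  induction n generalizing f with
  | zero => exact ⟨f, hf, by simp, by simp⟩
  | succ n ih =>
    obtain ⟨g, hg, hfg⟩ := exists_contDiff_eq_smul (f := fun p : ℝ × ℝ => f p.1)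
      (hf.comp contDiff_fst) fun _ => by simpa using hf0 0 n.succ_pos
    have hg' : ContDiff ℝ ∞ fun y => g (y, 0) := hg.comp (contDiff_id.prodMk contDiff_const)
    obtain rfl : f = fun y => y * g (y, 0) := funext fun y => hfg y 0
    obtain ⟨h, hh, hgh, hn⟩ := ih hg' fun i hi => by
      have hsucc := hf0 (i + 1) (by omega)
      rw [iteratedDeriv_succ_id_mul hg'] at hsucc
      exact (mul_eq_zero.1 hsucc).resolve_left (by positivity)
    refine ⟨h, hh, fun y => by simp only [hgh]; ring, ?_⟩
    rw [iteratedDeriv_succ_id_mul hg', hn, Nat.factorial_succ]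
    push_cast
    ring

end Hadamard

section NormalForm

variable {f η : ℝ × ℝ → ℝ × ℝ} {g q : ℝ × ℝ → ℝ} {k : ℕ}

theorem hasDerivAt_id_mul_zero {h : ℝ → ℝ} (hh : DifferentiableAt ℝ h 0) :
    HasDerivAt (fun y => y * h y) (h 0) 0 := by
  simpa using (hasDerivAt_id (0 : ℝ)).fun_mul hh.hasDerivAt

theorem exists_eq_axis_add_mul (hg : ContDiff ℝ ∞ g) :
    ∃ (a : ℝ → ℝ) (H : ℝ × ℝ → ℝ), ContDiff ℝ ∞ a ∧ ContDiff ℝ ∞ H ∧ H 0 = pdx (pdy g) 0 ∧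
      ∀ x y, g (x, y) = g (0, y) + a x + x * y * H (x, y) := by
  obtain ⟨L, hL, hgL⟩ := exists_contDiff_eq_smul (f := fun p : ℝ × ℝ => g p - g (0, p.2))
    (hg.sub (hg.comp (contDiff_const.prodMk contDiff_snd))) fun y => sub_self _
  have hL0 : ContDiff ℝ ∞ fun x => L (x, 0) := hL.comp (contDiff_id.prodMk contDiff_const)
  obtain ⟨M, hM, hLM⟩ := exists_contDiff_eq_smul
    (f := fun p : ℝ × ℝ => L (p.2, p.1) - L (p.2, 0))
    ((hL.comp (contDiff_snd.prodMk contDiff_fst)).sub (hL0.comp contDiff_snd)) fun x => sub_self _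
  simp only [smul_eq_mul] at hgL hLM
  have hgM (x y) : g (x, y) = g (0, y) + x * L (x, 0) + x * y * M (y, x) := by
    linear_combination hgL x y + x * hLM y x
  refine ⟨fun x => x * L (x, 0), fun p => M (p.2, p.1), contDiff_id.mul hL0,
    hM.comp (contDiff_snd.prodMk contDiff_fst), ?_, hgM⟩
  have hdM : Differentiable ℝ M := hM.differentiable (by simp)
  have hpdy (x) : pdy g (x, 0) = pdy g 0 + x * M (0, x) := by
    have hMx : HasDerivAt (fun y => y * M (y, x)) (M (0, x)) 0 :=
      hasDerivAt_id_mul_zero (h := fun y => M (y, x)) (by fun_prop)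
    have haxis : HasDerivAt (fun y => g (0, y)) (pdy g 0) 0 := by
      have hdg : Differentiable ℝ g := hg.differentiable (by simp)
      rw [pdy_eq_deriv hg]
      exact DifferentiableAt.hasDerivAt (by fun_prop)
    rw [pdy_eq_deriv hg]
    refine HasDerivAt.deriv ?_
    simpa [hgM x, mul_assoc] using (haxis.add_const (x * L (x, 0))).fun_add (hMx.const_mul x)
  have hMy : HasDerivAt (fun x => x * M (0, x)) (M (0, 0)) 0 :=
    hasDerivAt_id_mul_zero (h := fun x => M (0, x)) (by fun_prop)
  rw [pdx_eq_deriv (g := pdy g) (contDiff_dop _ hg)]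
  simp only [Prod.snd_zero, hpdy]
  exact (hMy.const_add _).deriv.symm

theorem HasMorinType.exists_eq_add_pow_mul (hg : ContDiff ℝ ∞ g) (hgk : HasMorinType k g) :
    ∃ D : ℝ → ℝ, ContDiff ℝ ∞ D ∧ D 0 ≠ 0 ∧ ∀ y, g (0, y) = g (0, 0) + y ^ (k + 1) * D y := by
  have hg0 : ContDiff ℝ ∞ fun y => g (0, y) := hg.comp (contDiff_const.prodMk contDiff_id)
  have hshift (i) : iteratedDeriv (i + 1) (fun y => g (0, y) - g (0, 0)) 0 =
      iteratedDeriv (i + 1) (fun y => g (0, y)) 0 := by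
    simp only [iteratedDeriv_succ', deriv_sub_const_fun]
  obtain ⟨D, hD, hgD, hDk⟩ := exists_contDiff_eq_pow_mul (n := k + 1) (hg0.sub contDiff_const)
    fun i hi => by
      cases i with
      | zero => exact sub_self _
      | succ i => rw [hshift, hgk.2.1 i (by omega)]
  refine ⟨D, hD, fun h0 => hgk.2.2 ?_, fun y => by rw [← hgD]; ring⟩
  rw [← hshift, hDk, h0, mul_zero]

/-- The second component `x y + y ^ (k + 1)` of the normal form of a Morin singularity of type
`A_k`. -/
def morinForm (k : ℕ) : ℝ × ℝ → ℝ :=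
  fun p => p.1 * p.2 + p.2 ^ (k + 1)

theorem contDiff_morinForm (k : ℕ) : ContDiff ℝ ∞ (morinForm k) :=
  (contDiff_fst.mul contDiff_snd).add (contDiff_snd.pow _)

theorem hasMorinType_morinForm (hk : 1 ≤ k) : HasMorinType k (morinForm k) := by
  have haxis (i) : iteratedDeriv (i + 1) (fun y => morinForm k (0, y)) 0 =
      iteratedDeriv (i + 1) (fun y : ℝ => y ^ (k + 1)) 0 := by simp [morinForm]
  have hpdy (x : ℝ) : pdy (morinForm k) (x, 0) = x := by
    rw [pdy_eq_deriv (contDiff_morinForm k)]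
    have hderiv := ((hasDerivAt_id (0 : ℝ)).const_mul x).fun_add (hasDerivAt_pow (k + 1) (0 : ℝ))
    simpa [morinForm, show k ≠ 0 by omega] using hderiv.deriv
  refine ⟨?_, fun i hi => ?_, ?_⟩
  · rw [pdx_eq_deriv (g := pdy (morinForm k)) (contDiff_dop _ (contDiff_morinForm k))]
    simp [hpdy]
  · rw [haxis, iteratedDeriv_fun_pow_zero, if_neg (by omega), Nat.cast_zero]
  · rw [haxis, iteratedDeriv_fun_pow_zero, if_pos rfl]
    positivity

theorem isCoordChange_smul_fst_mul_snd {t : ℝ} {H : ℝ × ℝ → ℝ} (ht : t ≠ 0)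
    (hH : ContDiff ℝ ∞ H) (hH0 : H 0 ≠ 0) : IsCoordChange fun p => (t * p.1, p.2 * H p) := by
  have hX : ContDiff ℝ ∞ fun p : ℝ × ℝ => t * p.1 := contDiff_const.mul contDiff_fst
  have hY : ContDiff ℝ ∞ fun p : ℝ × ℝ => p.2 * H p := contDiff_snd.mul hH
  refine isCoordChange_prodMk hX hY (by simp) (by simp) ?_
  have hdH : Differentiable ℝ H := hH.differentiable (by simp)
  have hYy : HasDerivAt (fun y => y * H (0, y)) (H 0) 0 :=
    hasDerivAt_id_mul_zero (h := fun y => H (0, y)) (by fun_prop)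
  simp [pdx_eq_deriv hX, pdy_eq_deriv hX, pdy_eq_deriv hY, hYy.deriv, ht, hH0]

theorem isCoordChange_smul_sub_fst {t : ℝ} {a : ℝ → ℝ} (ht : t ≠ 0) (ha : ContDiff ℝ ∞ a)
    (ha0 : a 0 = 0) : IsCoordChange fun p => (t * p.1, t * (p.2 - a p.1)) := by
  have hX : ContDiff ℝ ∞ fun p : ℝ × ℝ => t * p.1 := contDiff_const.mul contDiff_fst
  have hY : ContDiff ℝ ∞ fun p : ℝ × ℝ => t * (p.2 - a p.1) :=
    contDiff_const.mul (contDiff_snd.sub (ha.comp contDiff_fst))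
  refine isCoordChange_prodMk hX hY (by simp) (by simp [ha0]) ?_
  simp [pdx_eq_deriv hX, pdy_eq_deriv hX, pdy_eq_deriv hY, ht]

theorem HasMorinType.exists_isFlat_sub_morinForm (hg : ContDiff ℝ ∞ g) (hg0 : g 0 = 0)
    (hgk : HasMorinType k g) : ∃ q : ℝ × ℝ → ℝ, ContDiff ℝ ∞ q ∧
      AEquiv (graphMap g) (graphMap q) ∧ IsFlat (k + 2) (q - morinForm k) := by
  obtain ⟨a, H, ha, hH, hH0, hgH⟩ := exists_eq_axis_add_mul hg
  obtain ⟨D, hD, hD0, hgD⟩ := hgk.exists_eq_add_pow_mul hg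
  have ha0 : a 0 = 0 := by simpa using hgH 0 0
  have hg00 : g (0, 0) = 0 := hg0
  have hH0' : H 0 ≠ 0 := hH0 ▸ hgk.1
  -- The scale of `x` that turns the leading term `D 0 * y ^ (k + 1)` into `(y * H 0) ^ (k + 1)`.
  let t := H 0 ^ (k + 1) / D 0
  have ht : t ≠ 0 := div_ne_zero (pow_ne_zero _ hH0') hD0
  obtain ⟨q, hq, -, hgq, hflat⟩ :=
    exists_aEquiv_graphMap_of_fst_eq (contDiff_graphMap hg) .id
      (isCoordChange_smul_sub_fst ht ha ha0) (isCoordChange_smul_fst_mul_snd ht hH hH0')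
      fun _ => rfl
  refine ⟨q, hq, hgq, hflat _ _ (contDiff_morinForm k) ?_⟩
  let R : ℝ × ℝ → ℝ := fun p => t * D p.2 - H p ^ (k + 1)
  have hR : ContDiff ℝ ∞ R :=
    (contDiff_const.mul (hD.comp contDiff_snd)).sub (hH.pow _)
  have hR0 : R 0 = 0 := by simp [R, t, hD0]
  have hflatR : IsFlat (k + 1 + 1) (Prod.snd ^ (k + 1) * R) :=
    (IsFlat.pow contDiff_snd (isFlat_one_iff.2 rfl) _).mul (contDiff_snd.pow _) hR
      (isFlat_one_iff.2 hR0)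
  convert hflatR using 2 with p
  simp only [graphMap, morinForm, id, R, Pi.mul_apply, Pi.pow_apply, hgH p.1 p.2, hgD p.2, hg00]
  ring

theorem jetEquiv_graphMap_iff {m : ℝ × ℝ → ℝ} {r : ℕ} (hf : ContDiff ℝ ∞ f)
    (hm : ContDiff ℝ ∞ m) (hr : 1 ≤ r) : JetEquiv r f (graphMap m) ↔
      ∃ q : ℝ × ℝ → ℝ, ContDiff ℝ ∞ q ∧ AEquiv f (graphMap q) ∧ IsFlat (r + 1) (q - m) := by
  refine ⟨fun hfm => ?_, fun ⟨q, hq, hfq, hflat⟩ => ?_⟩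
  · obtain ⟨φ, ψ, hφ, hψ, hjet⟩ := jetEquiv_iff.1 hfm
    have hF : ContDiff ℝ ∞ (ψ ∘ f ∘ φ) := hψ.contDiff.comp (hf.comp hφ.contDiff)
    have hFm := hF.sub (contDiff_graphMap hm)
    have hflat : IsFlat (r + 1) (ψ ∘ f ∘ φ - graphMap m) :=
      (isFlat_sub_iff hF (contDiff_graphMap hm)).2 fun i hi => hjet i (by omega)
    let Φ : ℝ × ℝ → ℝ × ℝ := fun p => ((ψ (f (φ p))).1, p.2)
    have hΦ : ContDiff ℝ ∞ Φ := hF.fst.prodMk contDiff_snd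
    have hΦflat : IsFlat (r + 1) (Φ - id) := by
      convert hflat.clm_comp (.inl ℝ ℝ ℝ ∘L .fst ℝ ℝ ℝ) hFm using 1
      funext p
      simp [Φ, graphMap, Prod.ext_iff]
    have hΦ2 : IsFlat 2 (Φ - id) := fun i hi => hΦflat i (by omega)
    obtain ⟨q, hq, -, hfq, hqm⟩ :=
      exists_aEquiv_graphMap_of_fst_eq hf hφ hψ (hΦ2.isCoordChange hΦ) fun _ => rfl
    refine ⟨q, hq, hfq, hqm _ _ hm ?_⟩
    have hmΦ : IsFlat (r + 1) (m ∘ Φ - m ∘ id) := hΦflat.comp_sub_comp hm hΦ contDiff_id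
    convert IsFlat.sub ((ContinuousLinearMap.snd ℝ ℝ ℝ).contDiff.comp hFm)
      ((hm.comp hΦ).sub hm) (hflat.clm_comp (.snd ℝ ℝ ℝ) hFm) hmΦ using 1
    funext p
    simp [graphMap]
  · obtain ⟨φ, ψ, hφ, hψ, heq⟩ := aEquiv_iff.1 hfq
    refine jetEquiv_iff.2 ⟨φ, ψ, hφ, hψ, fun i hi => ?_⟩
    have hflat' : IsFlat (r + 1) (graphMap q - graphMap m) := by
      convert hflat.clm_comp (.inr ℝ ℝ ℝ) (hq.sub hm) using 1
      funext p
      simp [graphMap]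
    exact (EventuallyEq.iteratedFDeriv ℝ heq i).eq_of_nhds.trans
      ((isFlat_sub_iff (contDiff_graphMap hq) (contDiff_graphMap hm)).1 hflat' i (by omega))

theorem jetEquiv_morinForm_iff (hf : ContDiff ℝ ∞ f) (hf0 : f 0 = 0) (hcr : CorankOne f)
    (hη : IsNullVF f η) (hk : 2 ≤ k) :
    JetEquiv (k + 1) f (graphMap (morinForm k)) ↔ HasNullContact f η k := by
  have hcontact {q} (hq : ContDiff ℝ ∞ q) (hfq : AEquiv f (graphMap q)) :
      HasNullContact f η k ↔ HasMorinType k q := by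
    rw [← hasNullContact_graphMap_iff hk hq, hfq.hasNullContact_iff hf hf0 hcr
      (contDiff_graphMap hq) hη (isNullVF_graphMap hq)]
  rw [jetEquiv_graphMap_iff hf (contDiff_morinForm k) (by omega)]
  constructor
  · rintro ⟨q, hq, hfq, hflat⟩
    exact (hcontact hq hfq).2 <|
      (hasMorinType_morinForm (by omega)).of_isFlat_sub (by omega) (contDiff_morinForm k) hq hflat
  · intro hfη
    obtain ⟨g, hg, hg0, hfg⟩ := hcr.exists_aEquiv_graphMap hf hf0
    obtain ⟨q, hq, hgq, hflat⟩ :=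
      ((hcontact hg hfg).1 hfη).exists_isFlat_sub_morinForm hg hg0
    exact ⟨q, hq, hfg.trans hgq, hflat⟩

end NormalForm

theorem stmt1_general (f η : ℝ × ℝ → ℝ × ℝ) (hf : ContDiff ℝ ∞ f) (hf0 : f 0 = 0)
    (hcr : CorankOne f) (hη : IsNullVF f η) : ∀ r : ℕ, 3 ≤ r →
    (JetEquiv r f (fun p => (p.1, p.1 * p.2 + p.2 ^ r)) ↔
      (fderiv ℝ (jacDet f) 0 ≠ 0 ∧ (∀ i, 1 ≤ i → i ≤ r - 2 → etaIter η i (jacDet f) 0 = 0) ∧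
        etaIter η (r - 1) (jacDet f) 0 ≠ 0)) := by
  rintro (_ | k) hr
  · omega
  refine (jetEquiv_morinForm_iff hf hf0 hcr hη (by omega)).trans ?_
  refine and_congr_right fun _ => and_congr_left fun _ => ⟨fun h i _ hi => h i (by omega), ?_⟩
  rintro h (_ | i) hi
  · exact hcr.jacDet_eq_zero
  · exact h _ (by omega) (by omega)

theorem stmt1 (f η : ℝ × ℝ → ℝ × ℝ)
    (hf : ContDiff ℝ (⊤ : ℕ∞) f) (hf0 : f 0 = 0) (hcr : CorankOne f)
    (hη : IsNullVF f η) :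
    ∀ r : ℕ, 5 ≤ r →
      (JetEquiv r f (fun p => (p.1, p.1 * p.2 + p.2 ^ r)) ↔
        (fderiv ℝ (jacDet f) 0 ≠ 0 ∧
          (∀ i, 1 ≤ i → i ≤ r - 2 → etaIter η i (jacDet f) 0 = 0) ∧
          etaIter η (r - 1) (jacDet f) 0 ≠ 0)) :=
  fun r hr => stmt1_general f η hf hf0 hcr hη r (by omega)
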